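/- arXiv:1311.2927 — 5 statements merged into one kernel-verified Lean document; each statement's English description precedes it below -/
import Mathlib

section
/- Let a, b, c be integers with gcd(a,b) = 1, a ≠ 0, b ≠ 0, and let (x₀, y₀) be a solution of the LDE a·x + b·y = c. Then an integer i forms a singleton connected component (i.e. i is neither a source nor a sink of the LDE) if and only if b does not divide (i - x₀) and a does not divide (i - y₀). -/
section CommRing

variable {R : Type*} [CommRing R] {a b c x₀ y₀ : R}

theorem exists_mul_add_mul_eq_iff_dvd_mul_sub (h₀ : a * x₀ + b * y₀ = c) (x : R) :
    (∃ y, a * x + b * y = c) ↔ b ∣ a * (x - x₀) := by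
  constructor
  · rintro ⟨y, hy⟩
    exact ⟨y₀ - y, by linear_combination hy - h₀⟩
  · rintro ⟨k, hk⟩
    exact ⟨y₀ - k, by linear_combination h₀ + hk⟩

theorem exists_mul_add_mul_eq_iff_dvd_sub (hab : IsCoprime a b) (h₀ : a * x₀ + b * y₀ = c)
    (x : R) : (∃ y, a * x + b * y = c) ↔ b ∣ x - x₀ :=
  (exists_mul_add_mul_eq_iff_dvd_mul_sub h₀ x).trans
    ⟨hab.symm.dvd_of_dvd_mul_left, fun h => h.mul_left a⟩

theorem lde_singleton_component_iff_general (hab : IsCoprime a b) (h₀ : a * x₀ + b * y₀ = c)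
    (i : R) :
    (¬ (∃ y, a * i + b * y = c) ∧ ¬ (∃ y, a * y + b * i = c)) ↔
      (¬ b ∣ i - x₀ ∧ ¬ a ∣ i - y₀) := by
  have source_iff : (∃ y, a * i + b * y = c) ↔ b ∣ i - x₀ :=
    exists_mul_add_mul_eq_iff_dvd_sub hab h₀ i
  have sink_iff : (∃ y, a * y + b * i = c) ↔ a ∣ i - y₀ := by
    simpa only [add_comm] using
      exists_mul_add_mul_eq_iff_dvd_sub hab.symm ((add_comm _ _).trans h₀) i
  rw [source_iff, sink_iff]

end CommRing

/-- An iteration `i` forms a singleton connected component (it is neither a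
source nor a sink of the LDE `a*x + b*y = c`) iff `b ∤ (i - x₀)` and
`a ∤ (i - y₀)`. -/
theorem lde_singleton_component_iff (a b c x₀ y₀ : ℤ)
    (hgcd : Int.gcd a b = 1) (ha : a ≠ 0) (hb : b ≠ 0)
    (h₀ : a * x₀ + b * y₀ = c) :
    ∀ i : ℤ,
      (¬ (∃ y : ℤ, a * i + b * y = c) ∧ ¬ (∃ y : ℤ, a * y + b * i = c)) ↔
      (¬ b ∣ (i - x₀) ∧ ¬ a ∣ (i - y₀)) :=
  lde_singleton_component_iff_general (Int.isCoprime_iff_gcd_eq_one.mpr hgcd) h₀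
end

section
/- Let a, b, c be integers with gcd(a,b) = 1, and let e_0, e_1, ..., e_l (with l ≥ 1) be a chain for the LDE a·x + b·y = c, i.e. a·e_k + b·e_{k+1} = c for all 0 ≤ k < l. Then b^(l-1) divides (e_1 - e_0). -/
/-!
Subtracting consecutive equations of the chain shows that the differences `d k = e (k + 1) - e k`
satisfy `a * d k = -b * d (k + 1)`. Iterating gives `a ^ n * d 0 = (-b) ^ n * d n`, and `a ^ n` can
be cancelled from the divisibility because it is coprime to `b ^ n`.
-/

theorem pow_mul_zero_eq_pow_mul_of_forall_lt {M : Type*} [CommMonoid M] {a b : M} {d : ℕ → M}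
    {n : ℕ} (h : ∀ k < n, a * d k = b * d (k + 1)) : a ^ n * d 0 = b ^ n * d n := by
  induction n with
  | zero => simp
  | succ n ih =>
    calc a ^ (n + 1) * d 0 = a * (a ^ n * d 0) := by rw [pow_succ', mul_assoc]
      _ = a * (b ^ n * d n) := by rw [ih fun k hk => h k (hk.trans n.lt_succ_self)]
      _ = b ^ n * (a * d n) := mul_left_comm _ _ _
      _ = b ^ n * (b * d (n + 1)) := by rw [h n n.lt_succ_self]
      _ = b ^ (n + 1) * d (n + 1) := by rw [pow_succ, mul_assoc]

theorem lde_chain_divisibility_general {R : Type*} [CommRing R] {a b c : R} (hab : IsCoprime a b)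
    {n : ℕ} {e : ℕ → R} (hchain : ∀ k < n + 1, a * e k + b * e (k + 1) = c) :
    b ^ n ∣ e 1 - e 0 := by
  have diff_step : ∀ k < n, a * (e (k + 1) - e k) = -b * (e (k + 2) - e (k + 1)) := fun k hk => by
    linear_combination hchain (k + 1) (by lia) - hchain k (by lia)
  have diff_iterate : a ^ n * (e 1 - e 0) = (-b) ^ n * (e (n + 1) - e n) :=
    pow_mul_zero_eq_pow_mul_of_forall_lt (d := fun k => e (k + 1) - e k) diff_step
  have dvd_mul_diff : b ^ n ∣ a ^ n * (e 1 - e 0) := by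
    rw [diff_iterate]
    exact (pow_dvd_pow_of_dvd (dvd_neg.mpr dvd_rfl) n).mul_right _
  exact hab.symm.pow.dvd_of_dvd_mul_left dvd_mul_diff

/-- If `e_0, e_1, ..., e_l` (with `l ≥ 1`) is a chain for the LDE
`a*x + b*y = c` with `gcd a b = 1`, then `b^(l-1)` divides `e_1 - e_0`. -/
theorem lde_chain_divisibility (a b c : ℤ)
    (hgcd : Int.gcd a b = 1) (l : ℕ) (hl : 1 ≤ l)
    (e : ℕ → ℤ) (hchain : ∀ k < l, a * e k + b * e (k + 1) = c) :
    b ^ (l - 1) ∣ (e 1 - e 0) := by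
  obtain ⟨n, rfl⟩ := Nat.exists_eq_add_of_le' hl
  exact lde_chain_divisibility_general (Int.isCoprime_iff_gcd_eq_one.mpr hgcd) hchain
end

section
/- Let a, b, c be integers with gcd(a,b) = 1, and let e_0, e_1, ..., e_l (with l ≥ 1) be a chain for the LDE a·x + b·y = c such that e_0 ≠ e_1 and every e_k lies in the interval [L, U]. Then |b|^(l-1) ≤ U - L. In particular, if |b| ≥ 2 then the length of any non-degenerate chain contained in [L, U] is at most log_{|b|}(U - L) + 1. -/
/-!
Consecutive differences `d k = e (k + 1) - e k` of a chain satisfy `-a * d k = b * d (k + 1)`, so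
`(-a) ^ n * d 0 = b ^ n * d n`. Since `a` and `b` are coprime, `b ^ n` divides `d 0`, which is a
nonzero integer of absolute value at most `U - L`.
-/

theorem pow_mul_eq_pow_mul_of_mul_eq_mul_succ {M : Type*} [CommMonoid M] {a b : M} {d : ℕ → M}
    {n : ℕ} (hd : ∀ k < n, a * d k = b * d (k + 1)) : a ^ n * d 0 = b ^ n * d n := by
  induction n with
  | zero => simp only [pow_zero]
  | succ n ih =>
    calc a ^ (n + 1) * d 0 = a * (a ^ n * d 0) := by rw [pow_succ', mul_assoc]
      _ = a * (b ^ n * d n) := by rw [ih fun k hk => hd k (hk.trans n.lt_succ_self)]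
      _ = b ^ n * (a * d n) := mul_left_comm _ _ _
      _ = b ^ n * (b * d (n + 1)) := by rw [hd n n.lt_succ_self]
      _ = b ^ (n + 1) * d (n + 1) := by rw [pow_succ, mul_assoc]

theorem pow_dvd_of_mul_eq_mul_succ {R : Type*} [CommSemiring R] {a b : R} {d : ℕ → R}
    {n : ℕ} (hab : IsCoprime a b) (hd : ∀ k < n, a * d k = b * d (k + 1)) : b ^ n ∣ d 0 :=
  hab.symm.pow.dvd_of_dvd_mul_left ⟨d n, pow_mul_eq_pow_mul_of_mul_eq_mul_succ hd⟩

theorem natCast_le_logb_of_pow_le {b x : ℝ} {n : ℕ} (hb : 1 < b) (h : b ^ n ≤ x) :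
    (n : ℝ) ≤ Real.logb b x := by
  have hx : 0 < x := (pow_pos (zero_lt_one.trans hb) n).trans_le h
  rwa [Real.le_logb_iff_rpow_le hb hx, Real.rpow_natCast]

/-- A chain of length `l` for the linear Diophantine equation `a * x + b * y = c`, over any
semiring. It consists of the `l + 1` terms `e 0, ..., e l`; the later values of `e` are
irrelevant. -/
def IsLDEChain {R : Type*} [Semiring R] (a b c : R) (l : ℕ) (e : ℕ → R) : Prop :=
  ∀ k < l, a * e k + b * e (k + 1) = c

namespace IsLDEChain

theorem neg_mul_sub_eq_mul_sub {R : Type*} [Ring R] {a b c : R} {l k : ℕ} {e : ℕ → R}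
    (he : IsLDEChain a b c l e) (hk : k + 1 < l) :
    -a * (e (k + 1) - e k) = b * (e (k + 2) - e (k + 1)) := by
  have consecutive : a * e k + b * e (k + 1) = a * e (k + 1) + b * e (k + 2) :=
    (he k (k.lt_succ_self.trans hk)).trans (he (k + 1) hk).symm
  rw [neg_mul, mul_sub, mul_sub, neg_sub, sub_eq_sub_iff_add_eq_add, consecutive, add_comm]

theorem pow_dvd_sub {R : Type*} [CommRing R] {a b c : R} {n : ℕ} {e : ℕ → R}
    (he : IsLDEChain a b c (n + 1) e) (hab : IsCoprime a b) : b ^ n ∣ e 1 - e 0 :=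
  pow_dvd_of_mul_eq_mul_succ (d := fun k => e (k + 1) - e k) hab.neg_left fun _ hk =>
    he.neg_mul_sub_eq_mul_sub (Nat.succ_lt_succ hk)

theorem abs_pow_le_abs_sub {a b c : ℤ} {n : ℕ} {e : ℕ → ℤ} (he : IsLDEChain a b c (n + 1) e)
    (hab : IsCoprime a b) (hne : e 0 ≠ e 1) : |b| ^ n ≤ |e 1 - e 0| := by
  have hdvd : |b| ^ n ∣ e 1 - e 0 := by
    rw [← abs_pow, abs_dvd]
    exact he.pow_dvd_sub hab
  exact Int.le_abs_of_dvd (sub_ne_zero.mpr hne.symm) hdvd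

end IsLDEChain

/-- Upper bound on the length of a non-degenerate chain contained in the
iteration range `[L, U]`: `|b|^(l-1) ≤ U - L`, and hence, when `|b| ≥ 2`,
`l ≤ log_{|b|} (U - L) + 1`. -/
theorem lde_chain_length_bound (a b c : ℤ)
    (hgcd : Int.gcd a b = 1) (l : ℕ) (hl : 1 ≤ l)
    (e : ℕ → ℤ) (hchain : ∀ k < l, a * e k + b * e (k + 1) = c)
    (hne : e 0 ≠ e 1) (L U : ℤ)
    (hrange : ∀ k ≤ l, L ≤ e k ∧ e k ≤ U) :
    |b| ^ (l - 1) ≤ U - L ∧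
    (2 ≤ |b| → (l : ℝ) ≤ Real.logb (|b| : ℝ) ((U : ℝ) - (L : ℝ)) + 1) := by
  obtain ⟨n, rfl⟩ := Nat.exists_eq_add_of_le' hl
  have he : IsLDEChain a b c (n + 1) e := hchain
  obtain ⟨hL0, hU0⟩ := hrange 0 (Nat.zero_le _)
  obtain ⟨hL1, hU1⟩ := hrange 1 hl
  have pow_le : |b| ^ n ≤ U - L :=
    calc |b| ^ n ≤ |e 1 - e 0| := he.abs_pow_le_abs_sub (Int.isCoprime_iff_gcd_eq_one.mpr hgcd) hne
      _ ≤ U - L := abs_sub_le_iff.mpr ⟨sub_le_sub hU1 hL0, sub_le_sub hU0 hL1⟩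
  refine ⟨pow_le, fun hb => ?_⟩
  have one_lt_abs : (1 : ℝ) < |(b : ℝ)| := mod_cast one_lt_two.trans_le hb
  have n_le_logb : (n : ℝ) ≤ Real.logb |(b : ℝ)| ((U : ℝ) - L) :=
    natCast_le_logb_of_pow_le one_lt_abs (mod_cast pow_le)
  rw [Nat.cast_add_one]
  gcongr
end

section
/- Let a, b, c be integers with gcd(a,b) = 1, a ≥ 1, |b| ≥ 2, and let (x₀, y₀) be a solution of the LDE a·x + b·y = c. Let L ≤ U be integers and R = U - L + 1. Then the number of integers x in [L, U] that are neither a source nor a sink of the LDE (i.e. b does not divide (x - x₀) and a does not divide (x - y₀)) is at least R - R/a - R/|b| - 2 (as real numbers). -/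
/-!
Two sources of `a * x + b * y = c` are congruent modulo `|b| / gcd a b`, so an interval of `R`
integers contains at most `R * gcd a b / |b| + 1` of them. Exchanging `a` and `b` turns sinks into
sources, and discarding both kinds from the interval leaves at least the claimed number of integers.
-/

open Finset

theorem mul_card_Ioc_filter_modEq_le {m L U : ℤ} (hm : 0 < m) (hLU : L ≤ U) (v : ℤ) :
    m * #{x ∈ Ioc L U | x ≡ v [ZMOD m]} ≤ U - L + m := by
  have hm' : (0 : ℚ) < m := Int.cast_pos.2 hm
  have hfloor_mono : ⌊(L - v) / (m : ℚ)⌋ ≤ ⌊(U - v) / (m : ℚ)⌋ := by gcongr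
  have hcard := Int.Ioc_filter_modEq_card L U hm v
  rw [max_eq_left (sub_nonneg.2 hfloor_mono)] at hcard
  have hfloor_U : (⌊(U - v) / (m : ℚ)⌋ : ℚ) * m ≤ U - v :=
    (le_div_iff₀ hm').1 (Int.floor_le _)
  have hfloor_L : (L - v : ℚ) < (⌊(L - v) / (m : ℚ)⌋ + 1) * m :=
    (div_lt_iff₀ hm').1 (Int.lt_floor_add_one _)
  rw [hcard]
  norm_cast at hfloor_U hfloor_L ⊢
  linarith

theorem modEq_abs_div_gcd_of_mul_add_mul_eq {a b x y x' y' : ℤ} (hb : b ≠ 0)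
    (h : a * x + b * y = a * x' + b * y') : x ≡ x' [ZMOD |b| / Int.gcd a b] := by
  have hmod : a * x ≡ a * x' [ZMOD |b|] :=
    Int.modEq_iff_dvd.2 <| (abs_dvd _ _).2 ⟨y - y', by linarith⟩
  have hgcd : Int.gcd |b| a = Int.gcd a b := by
    rw [Int.gcd_comm, Int.gcd_def, Int.natAbs_abs, ← Int.gcd_def]
  simpa only [hgcd] using hmod.cancel_left_div_gcd (abs_pos.2 hb)

open scoped Classical in
theorem abs_mul_card_filter_exists_mul_add_mul_eq_le {a b L U : ℤ} (hb : b ≠ 0) (hLU : L ≤ U)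
    (c : ℤ) :
    |b| * #{x ∈ Icc L U | ∃ y, a * x + b * y = c} ≤ Int.gcd a b * (U - L + 1) + |b| := by
  by_cases hsource : ∃ x y, a * x + b * y = c
  · obtain ⟨x', y', h'⟩ := hsource
    obtain ⟨m, hm⟩ : (Int.gcd a b : ℤ) ∣ |b| := (dvd_abs _ _).2 (Int.gcd_dvd_right a b)
    have hgcd : (0 : ℤ) < Int.gcd a b := Int.natCast_pos.2 (Int.gcd_pos_of_ne_zero_right a hb)
    have hm_pos : 0 < m := pos_of_mul_pos_right (hm ▸ abs_pos.2 hb) hgcd.le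
    have hm_eq : |b| / Int.gcd a b = m := Int.ediv_eq_of_eq_mul_right hgcd.ne' hm
    have hsubset : {x ∈ Icc L U | ∃ y, a * x + b * y = c} ⊆
        {x ∈ Ioc (L - 1) U | x ≡ x' [ZMOD m]} := by
      rw [Ioc_sub_one_left_eq_Icc]
      intro x hx
      obtain ⟨hxLU, y, h⟩ := mem_filter.1 hx
      exact mem_filter.2
        ⟨hxLU, hm_eq ▸ modEq_abs_div_gcd_of_mul_add_mul_eq hb (h.trans h'.symm)⟩
    calc |b| * (#{x ∈ Icc L U | ∃ y, a * x + b * y = c} : ℤ)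
        ≤ |b| * #{x ∈ Ioc (L - 1) U | x ≡ x' [ZMOD m]} := by gcongr
      _ = Int.gcd a b * (m * #{x ∈ Ioc (L - 1) U | x ≡ x' [ZMOD m]}) := by rw [hm, mul_assoc]
      _ ≤ Int.gcd a b * (U - (L - 1) + m) := by
        gcongr
        exact mul_card_Ioc_filter_modEq_le hm_pos (by linarith) x'
      _ = Int.gcd a b * (U - L + 1) + |b| := by rw [hm]; ring
  · have hempty : {x ∈ Icc L U | ∃ y, a * x + b * y = c} = ∅ :=
      filter_false_of_mem fun x _ hx => hsource ⟨x, hx⟩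
    rw [hempty, card_empty, Nat.cast_zero, mul_zero]
    exact add_nonneg (mul_nonneg (Int.natCast_nonneg _) (by linarith)) (abs_nonneg b)

open scoped Classical in
theorem card_filter_exists_mul_add_mul_eq_le {a b L U : ℤ} (hb : b ≠ 0) (hLU : L ≤ U) (c : ℤ) :
    (#{x ∈ Icc L U | ∃ y, a * x + b * y = c} : ℝ) ≤
      ((U : ℝ) - L + 1) * Int.gcd a b / |(b : ℝ)| + 1 := by
  have hb' : 0 < |(b : ℝ)| := abs_pos.2 (Int.cast_ne_zero.2 hb)
  have hcard : |(b : ℝ)| * #{x ∈ Icc L U | ∃ y, a * x + b * y = c} ≤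
      Int.gcd a b * ((U : ℝ) - L + 1) + |(b : ℝ)| := by
    exact_mod_cast abs_mul_card_filter_exists_mul_add_mul_eq_le hb hLU c
  rw [div_add_one hb'.ne', le_div_iff₀ hb']
  linarith

theorem card_le_card_filter_not_and_not_add {α : Type*} (s : Finset α) (p q : α → Prop)
    [DecidablePred p] [DecidablePred q] :
    #s ≤ #{x ∈ s | ¬ p x ∧ ¬ q x} + (#{x ∈ s | p x} + #{x ∈ s | q x}) := by
  classical
  have hsplit := s.card_filter_add_card_filter_not fun x => p x ∨ q x
  simp only [not_or, filter_or] at hsplit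
  have hunion := card_union_le {x ∈ s | p x} {x ∈ s | q x}
  lia

open scoped Classical in
theorem lde_singleton_count_lower_bound_general {a b L U : ℤ} (ha : a ≠ 0) (hb : b ≠ 0)
    (hLU : L ≤ U) (c : ℤ) :
    ((U : ℝ) - L + 1) - ((U : ℝ) - L + 1) * Int.gcd a b / |(a : ℝ)|
        - ((U : ℝ) - L + 1) * Int.gcd a b / |(b : ℝ)| - 2 ≤
      (#{x ∈ Icc L U | ¬ (∃ y : ℤ, a * x + b * y = c) ∧ ¬ (∃ y : ℤ, a * y + b * x = c)} : ℝ) := by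
  have hsources := card_filter_exists_mul_add_mul_eq_le (a := a) hb hLU c
  have hsinks := card_filter_exists_mul_add_mul_eq_le (a := b) ha hLU c
  simp only [Int.gcd_comm b a, add_comm (b * _) (a * _)] at hsinks
  have hsize : (#(Icc L U) : ℝ) = U + 1 - L := by
    exact_mod_cast Int.card_Icc_of_le L U (by linarith)
  have hcount : (#(Icc L U) : ℝ) ≤
      #{x ∈ Icc L U | ¬ (∃ y : ℤ, a * x + b * y = c) ∧ ¬ (∃ y : ℤ, a * y + b * x = c)} +
        (#{x ∈ Icc L U | ∃ y, a * x + b * y = c} + #{x ∈ Icc L U | ∃ y, a * y + b * x = c}) := by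
    exact_mod_cast card_le_card_filter_not_and_not_add (Icc L U) _ _
  linarith

open scoped Classical in
/-- Lower bound on the number of independent iterations (singleton connected
components) of the LDE `a*x + b*y = c` over the range `[L, U]` of size
`R = U - L + 1`: it is at least `R - R/a - R/|b| - 2`. -/
theorem lde_singleton_count_lower_bound (a b c x₀ y₀ : ℤ)
    (hgcd : Int.gcd a b = 1) (ha : 1 ≤ a) (hb : 2 ≤ |b|)
    (h₀ : a * x₀ + b * y₀ = c)
    (L U : ℤ) (hLU : L ≤ U) :
    ((U : ℝ) - L + 1) - ((U : ℝ) - L + 1) / (a : ℝ)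
        - ((U : ℝ) - L + 1) / |(b : ℝ)| - 2 ≤
      (((Finset.Icc L U).filter
          (fun x => ¬ (∃ y : ℤ, a * x + b * y = c) ∧
                    ¬ (∃ y : ℤ, a * y + b * x = c))).card : ℝ) := by
  have ha_pos : 0 < a := ha
  have hb_ne : b ≠ 0 := abs_pos.1 (by linarith)
  simpa only [hgcd, abs_of_pos (Int.cast_pos (R := ℝ).2 ha_pos), Nat.cast_one, mul_one] using
    lde_singleton_count_lower_bound_general ha_pos.ne' hb_ne hLU c
end

section
/- Let a, b, c be integers with 0 < a < |b|, and let e_0, e_1, ..., e_l (with l ≥ 1) be a chain for the LDE a·x + b·y = c (i.e. a·e_k + b·e_{k+1} = c for all 0 ≤ k < l) such that e_l = e_0. Then every element of the chain is the fixed point: (a + b)·e_k = c for all 0 ≤ k ≤ l, and consequently e_0 = e_1 = ... = e_l. Hence the dependence graph of a normalized LDE with a < |b| contains no nontrivial cycles. -/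
/-!
The deviation `d k = (a + b) * e k - c` from the fixed point satisfies the homogeneous recurrence
`b * d (k + 1) = -a * d k`. Going once around a cycle of length `l` from any of its points gives
`b ^ l * d k = (-a) ^ l * d k`, so `d k = 0` as soon as `(-a) ^ l ≠ b ^ l`; for integers with
`|a| ≠ |b|` this holds by comparing absolute values.
-/

section Recurrence

variable {M : Type*} [CommMonoid M] {p q : M} {d : ℕ → M}

theorem pow_mul_eq_pow_mul_of_mul_succ_eq {n : ℕ} (hstep : ∀ k < n, q * d (k + 1) = p * d k) :
    q ^ n * d n = p ^ n * d 0 := by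
  induction n with
  | zero => simp
  | succ n ih =>
    calc q ^ (n + 1) * d (n + 1)
        = q ^ n * (q * d (n + 1)) := by rw [pow_succ, mul_assoc]
      _ = p * (q ^ n * d n) := by rw [hstep n n.lt_succ_self, mul_left_comm]
      _ = p ^ (n + 1) * d 0 := by
        rw [ih fun k hk => hstep k (hk.trans n.lt_succ_self), pow_succ', mul_assoc]

theorem pow_mul_eq_pow_mul_of_mul_succ_eq_of_cycle {l k : ℕ}
    (hstep : ∀ j < l, q * d (j + 1) = p * d j) (hcycle : d l = d 0) (hk : k ≤ l) :
    q ^ l * d k = p ^ l * d k := by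
  obtain ⟨m, rfl⟩ := Nat.exists_eq_add_of_le hk
  have from_start : q ^ k * d k = p ^ k * d 0 :=
    pow_mul_eq_pow_mul_of_mul_succ_eq fun j hj => hstep j (by lia)
  have to_end : q ^ m * d (k + m) = p ^ m * d k :=
    pow_mul_eq_pow_mul_of_mul_succ_eq (d := fun j => d (k + j)) fun j hj => hstep (k + j) (by lia)
  calc q ^ (k + m) * d k
      = q ^ m * (q ^ k * d k) := by rw [pow_add, mul_comm (q ^ k), mul_assoc]
    _ = p ^ k * (q ^ m * d (k + m)) := by rw [from_start, hcycle, mul_left_comm]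
    _ = p ^ (k + m) * d k := by rw [to_end, pow_add, mul_assoc]

end Recurrence

theorem mul_deviation_eq_neg_mul_deviation {R : Type*} [CommRing R] {a b c x y : R}
    (h : a * x + b * y = c) : b * ((a + b) * y - c) = -a * ((a + b) * x - c) := by
  linear_combination (a + b) * h

theorem abs_eq_abs_of_pow_eq_pow {R : Type*} [Ring R] [LinearOrder R] [IsStrictOrderedRing R]
    {a b : R} {n : ℕ} (hn : n ≠ 0) (h : a ^ n = b ^ n) : |a| = |b| :=
  abs_eq_abs.mpr (((pow_eq_pow_iff_of_ne_zero hn).mp h).imp_right And.left)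

theorem lde_no_nontrivial_cycles_general {R : Type*} [CommRing R] [NoZeroDivisors R] {a b c : R}
    {l : ℕ} (hpow : (-a) ^ l ≠ b ^ l) {e : ℕ → R}
    (hchain : ∀ k < l, a * e k + b * e (k + 1) = c) (hcycle : e l = e 0) :
    (∀ k ≤ l, (a + b) * e k = c) ∧ (∀ k ≤ l, e k = e 0) := by
  have fixed : ∀ k ≤ l, (a + b) * e k = c := by
    intro k hk
    have around : b ^ l * ((a + b) * e k - c) = (-a) ^ l * ((a + b) * e k - c) :=
      pow_mul_eq_pow_mul_of_mul_succ_eq_of_cycle (d := fun j => (a + b) * e j - c)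
        (fun j hj => mul_deviation_eq_neg_mul_deviation (hchain j hj)) (by rw [hcycle]) hk
    exact sub_eq_zero.mp ((mul_eq_mul_right_iff.mp around).resolve_left hpow.symm)
  have sum_ne_zero : a + b ≠ 0 := fun h => hpow (by rw [neg_eq_of_add_eq_zero_right h])
  exact ⟨fixed, fun k hk =>
    mul_left_cancel₀ sum_ne_zero ((fixed k hk).trans (fixed 0 l.zero_le).symm)⟩

/-- A normalized LDE `a*x + b*y = c` with `0 < a < |b|` has no nontrivial
cyclic dependences: any chain that returns to its starting point consists
entirely of the fixed point, i.e. `(a + b) * e_k = c` and `e_k = e_0` for all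
`k ≤ l`. -/
theorem lde_no_nontrivial_cycles (a b c : ℤ) (ha : 0 < a) (hab : a < |b|)
    (l : ℕ) (hl : 1 ≤ l) (e : ℕ → ℤ)
    (hchain : ∀ k < l, a * e k + b * e (k + 1) = c)
    (hcycle : e l = e 0) :
    (∀ k ≤ l, (a + b) * e k = c) ∧ (∀ k ≤ l, e k = e 0) := by
  have abs_ne : |-a| ≠ |b| := by rw [abs_neg, abs_of_pos ha]; exact hab.ne
  exact lde_no_nontrivial_cycles_general
    (mt (abs_eq_abs_of_pow_eq_pow (Nat.one_le_iff_ne_zero.mp hl)) abs_ne) hchain hcycle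
end
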